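/- (L^ε estimate) There exist constants ε > 0 and C > 0 depending only on n, λ, Λ such that: if a_{ij} : Q₃ → ℝ are uniformly elliptic measurable coefficients and v ∈ C²(Q₃) is nonnegative and satisfies Σ_{i,j} a_{ij}(x) ∂_{ij} v(x) ≤ 0 for all x ∈ Q₃, then (∫_{Q₁} v^ε dx)^{1/ε} ≤ C inf_{Q₂} v. -/

import Mathlib

open MeasureTheory Metric Set Filter
open scoped ENNReal NNReal Topology

noncomputable section

/-- Euclidean space `ℝⁿ`. -/
abbrev En (n : ℕ) := EuclideanSpace ℝ (Fin n)

/-- The second partial derivative `∂_{ij} v (x)`. -/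
def pd2 {n : ℕ} (v : En n → ℝ) (i j : Fin n) (x : En n) : ℝ :=
  fderiv ℝ (fun y => fderiv ℝ v y (EuclideanSpace.single i 1)) x (EuclideanSpace.single j 1)

/-- Measurable, uniformly elliptic coefficients on `Ω`:
`λ|ξ|² ≤ Σ aᵢⱼ(x) ξᵢ ξⱼ ≤ Λ|ξ|²` for every `x ∈ Ω` and all `ξ`. -/
def UnifEllipticOn {n : ℕ} (Ω : Set (En n)) (lam Lam : ℝ)
    (a : Fin n → Fin n → En n → ℝ) : Prop :=
  (∀ i j, Measurable (a i j)) ∧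
    ∀ x ∈ Ω, ∀ ξ : En n,
      lam * ∑ i, ξ i ^ 2 ≤ ∑ i, ∑ j, a i j x * ξ i * ξ j ∧
      ∑ i, ∑ j, a i j x * ξ i * ξ j ≤ Lam * ∑ i, ξ i ^ 2

/-- The open cube `(−r/2, r/2)ⁿ` centered at the origin with side length `r`. -/
def cube (n : ℕ) (r : ℝ) : Set (En n) := {x : En n | ∀ i, |x i| < r / 2}

/-!
Let `u` be a nonnegative supersolution and `Q` a cube within distance comparable to its side of a
point where `u ≤ s`. Comparison with a radial barrier along a chain of balls produces a point `y`
near the centre of `Q` with `u y ≤ A * s`. Now slide concave paraboloids with vertices near `y` up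
until they touch the graph of `u`. At a contact point `u ≤ 2 * A * s`, and `D² u` is bounded from
below by the paraboloid and hence, by the equation, also from above. So the map from contact point
to vertex has bounded Jacobian, and `{u ≤ 2 * A * s}` fills at least a fraction `η` of `Q`.

With `M = 2 * A`, the integral bound
`∫ x in Q, u x ^ ε ≤ (M * s) ^ ε * (|Q| + K * |Q ∩ {s < u}|)` whenever `u ≤ M * s` somewhere in `Q`
passes from the `2 ^ n` dyadic children of `Q` to `Q`. If `u ≤ s` somewhere in `Q`, then every child
contains a point with `u ≤ M * s` and the bounds simply add up. Otherwise `s < u` on all of `Q`; the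
bounds add up at level `M ^ 2 * s`, and since `{M ^ 2 * s < u}` misses a fixed fraction of `Q` the
loss `M ^ (2 * ε)` is absorbed when `ε` is small. The induction starts at cubes so small that `u` is
nearly constant on them.
-/

section EllipticMatrices

variable {ι : Type*} [Fintype ι]

/-- `A` is uniformly elliptic with constants `lam` and `Lam`: `lam |ξ|² ≤ ξᵀ A ξ ≤ Lam |ξ|²` for
all `ξ`. Symmetry of `A` is not required. -/
def IsElliptic (lam Lam : ℝ) (A : Matrix ι ι ℝ) : Prop :=
  ∀ ξ : EuclideanSpace ℝ ι, lam * ∑ i, ξ i ^ 2 ≤ ∑ i, ∑ j, A i j * ξ i * ξ j ∧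
    ∑ i, ∑ j, A i j * ξ i * ξ j ≤ Lam * ∑ i, ξ i ^ 2

lemma IsElliptic.trace_le {lam Lam : ℝ} {A : Matrix ι ι ℝ} (hA : IsElliptic lam Lam A) :
    A.trace ≤ Fintype.card ι * Lam := by
  classical
  have diag_le (i : ι) : A.diag i ≤ Lam := by
    simpa [Pi.single_apply] using (hA (EuclideanSpace.single i 1)).2
  calc A.trace ≤ ∑ _i : ι, Lam := Finset.sum_le_sum fun i _ => diag_le i
    _ = Fintype.card ι * Lam := by simp

lemma IsElliptic.mul_trace_le {lam Lam : ℝ} {A H : Matrix ι ι ℝ} (hA : IsElliptic lam Lam A)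
    (hH : H.PosSemidef) : lam * H.trace ≤ ∑ i, ∑ j, A i j * H i j := by
  obtain ⟨m, w, rfl⟩ := Matrix.posSemidef_iff_eq_sum_vecMulVec.1 hH
  calc lam * (∑ k, Matrix.vecMulVec (w k) (star (w k))).trace
      = ∑ k, lam * ∑ i, w k i ^ 2 := by
        simp [Matrix.trace_sum, Matrix.trace_vecMulVec, dotProduct, Finset.mul_sum, sq]
    _ ≤ ∑ k, ∑ i, ∑ j, A i j * w k i * w k j :=
        Finset.sum_le_sum fun k _ => (hA (WithLp.toLp 2 (w k))).1
    _ = ∑ i, ∑ j, ∑ k, A i j * w k i * w k j := by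
        rw [Finset.sum_comm]
        exact Finset.sum_congr rfl fun i _ => Finset.sum_comm
    _ = ∑ i, ∑ j, A i j * (∑ k, Matrix.vecMulVec (w k) (star (w k))) i j := by
        simp [Matrix.sum_apply, Matrix.vecMulVec_apply, Finset.mul_sum, mul_assoc]

lemma abs_apply_le_trace_of_posSemidef {H : Matrix ι ι ℝ} (hH : H.PosSemidef) (i j : ι) :
    |H i j| ≤ H.trace := by
  obtain ⟨m, w, rfl⟩ := Matrix.posSemidef_iff_eq_sum_vecMulVec.1 hH
  have sq_coord_le (k : Fin m) (l : ι) : w k l ^ 2 ≤ ∑ l, w k l ^ 2 :=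
    Finset.single_le_sum (fun l _ => sq_nonneg (w k l)) (Finset.mem_univ l)
  have abs_mul_le (k : Fin m) : |w k i * w k j| ≤ ∑ l, w k l ^ 2 := by
    rw [abs_mul]
    linarith [two_mul_le_add_sq |w k i| |w k j|, sq_abs (w k i), sq_abs (w k j),
      sq_coord_le k i, sq_coord_le k j]
  calc |(∑ k, Matrix.vecMulVec (w k) (star (w k))) i j|
      ≤ ∑ k, |w k i * w k j| := by
        simpa [Matrix.sum_apply, Matrix.vecMulVec_apply] using
          Finset.abs_sum_le_sum_abs (fun k => w k i * w k j) Finset.univ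
    _ ≤ ∑ k, ∑ l, w k l ^ 2 := Finset.sum_le_sum fun k _ => abs_mul_le k
    _ = (∑ k, Matrix.vecMulVec (w k) (star (w k))).trace := by
        simp [Matrix.trace_sum, Matrix.trace_vecMulVec, dotProduct, sq]

end EllipticMatrices

section SecondDerivativeTest

variable {E : Type*} [NormedAddCommGroup E] [NormedSpace ℝ E]

lemma differentiableAt_fderiv_of_contDiffAt_two {w : E → ℝ} {x : E} (hw : ContDiffAt ℝ 2 w x) :
    DifferentiableAt ℝ (fderiv ℝ w) x :=
  (hw.fderiv_right (m := 1) (by norm_num)).differentiableAt (by norm_num)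

lemma deriv_deriv_nonneg_of_isLocalMin {g : ℝ → ℝ} {t : ℝ} (hmin : IsLocalMin g t)
    (hg : ContinuousAt g t) : 0 ≤ deriv (deriv g) t := by
  by_contra! hneg
  have hmax : IsLocalMax g t := isLocalMax_of_deriv_deriv_neg hneg hmin.deriv_eq_zero hg
  have hconst : g =ᶠ[𝓝 t] fun _ => g t := by
    filter_upwards [hmin, hmax] with s h₁ h₂ using le_antisymm h₂ h₁
  have : deriv (deriv g) t = 0 := by simp [hconst.deriv.deriv_eq]
  exact hneg.ne this

lemma fderiv_fderiv_nonneg_of_isLocalMin {w : E → ℝ} {x : E} (hw : ContDiffAt ℝ 2 w x)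
    (hmin : IsLocalMin w x) (e : E) : 0 ≤ fderiv ℝ (fderiv ℝ w) x e e := by
  let line : ℝ → E := fun t => x + t • e
  have line_zero : line 0 = x := by simp [line]
  have hasDerivAt_line (t : ℝ) : HasDerivAt line e t := by
    simpa [line] using ((hasDerivAt_id t).smul_const e).const_add x
  have tendsto_line : Tendsto line (𝓝 0) (𝓝 x) := line_zero ▸ (hasDerivAt_line 0).continuousAt
  have deriv_restrict : deriv (w ∘ line) =ᶠ[𝓝 0] fun t => fderiv ℝ w (line t) e := by
    filter_upwards [tendsto_line.eventually (hw.eventually (by simp))] with t ht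
    exact ((ht.differentiableAt (by norm_num)).hasFDerivAt.comp_hasDerivAt t
      (hasDerivAt_line t)).deriv
  have deriv_deriv_restrict : deriv (deriv (w ∘ line)) 0 = fderiv ℝ (fderiv ℝ w) x e e := by
    have hasFDerivAt_fderiv : HasFDerivAt (fderiv ℝ w) (fderiv ℝ (fderiv ℝ w) x) (line 0) :=
      line_zero.symm ▸ (differentiableAt_fderiv_of_contDiffAt_two hw).hasFDerivAt
    rw [deriv_restrict.deriv_eq]
    simpa using ((hasFDerivAt_fderiv.comp_hasDerivAt (0 : ℝ) (hasDerivAt_line 0)).clm_apply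
      (hasDerivAt_const (0 : ℝ) e)).deriv
  have isLocalMin_restrict : IsLocalMin (w ∘ line) 0 := by
    simpa [IsLocalMin, IsMinFilter, line_zero] using tendsto_line.eventually hmin
  have continuousAt_restrict : ContinuousAt (w ∘ line) 0 :=
    ContinuousAt.comp (line_zero.symm ▸ hw.continuousAt) (hasDerivAt_line 0).continuousAt
  exact deriv_deriv_restrict ▸
    deriv_deriv_nonneg_of_isLocalMin isLocalMin_restrict continuousAt_restrict

end SecondDerivativeTest

section Hessian

variable {n : ℕ}

/-- The Hessian matrix `D² v (x)`. -/
def hessian (v : En n → ℝ) (x : En n) : Matrix (Fin n) (Fin n) ℝ :=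
  Matrix.of fun i j => pd2 v i j x

lemma hessian_apply {v : En n → ℝ} {x : En n} (hv : ContDiffAt ℝ 2 v x) (i j : Fin n) :
    hessian v x i j =
      fderiv ℝ (fderiv ℝ v) x (EuclideanSpace.single j 1) (EuclideanSpace.single i 1) := by
  rw [hessian, Matrix.of_apply, pd2, fderiv_clm_apply
    (differentiableAt_fderiv_of_contDiffAt_two hv) (differentiableAt_const _)]
  simp

lemma hessian_sub {v w : En n → ℝ} {x : En n} (hv : ContDiffAt ℝ 2 v x)
    (hw : ContDiffAt ℝ 2 w x) :
    hessian (fun y => v y - w y) x = hessian v x - hessian w x := by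
  have fderiv_sub_eventuallyEq :
      fderiv ℝ (fun y => v y - w y) =ᶠ[𝓝 x] fun y => fderiv ℝ v y - fderiv ℝ w y := by
    filter_upwards [hv.eventually (by simp), hw.eventually (by simp)] with y hvy hwy
    exact fderiv_fun_sub (hvy.differentiableAt (by norm_num)) (hwy.differentiableAt (by norm_num))
  ext i j
  rw [Matrix.sub_apply, hessian_apply (hv.sub hw), hessian_apply hv, hessian_apply hw,
    fderiv_sub_eventuallyEq.fderiv_eq, fderiv_fun_sub
      (differentiableAt_fderiv_of_contDiffAt_two hv) (differentiableAt_fderiv_of_contDiffAt_two hw)]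
  rfl

lemma sum_single_smul (e : Fin n → ℝ) :
    ∑ i, e i • EuclideanSpace.single i (1 : ℝ) = (WithLp.toLp 2 e : En n) := by
  ext k
  simp [Pi.single_apply]

lemma hessian_mulVec_apply {v : En n → ℝ} {x : En n} (hv : ContDiffAt ℝ 2 v x) (e : En n)
    (i : Fin n) : (hessian v x).mulVec e i =
      fderiv ℝ (fderiv ℝ v) x e (EuclideanSpace.single i 1) := by
  conv_rhs => rw [show e = WithLp.toLp 2 e.ofLp from rfl, ← sum_single_smul]
  simp [Matrix.mulVec, dotProduct, hessian_apply hv, mul_comm]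

lemma posSemidef_hessian_of_isLocalMin {v : En n → ℝ} {x : En n} (hv : ContDiffAt ℝ 2 v x)
    (hmin : IsLocalMin v x) : (hessian v x).PosSemidef := by
  refine Matrix.PosSemidef.of_dotProduct_mulVec_nonneg ?_ fun e => ?_
  · ext i j
    simpa [hessian_apply hv] using (hv.isSymmSndFDerivAt (by simp)).eq _ _
  · have quadratic_form : star e ⬝ᵥ (hessian v x).mulVec e =
        fderiv ℝ (fderiv ℝ v) x (WithLp.toLp 2 e) (WithLp.toLp 2 e) := by
      conv_rhs => arg 2; rw [← sum_single_smul]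
      simp [dotProduct, ← hessian_mulVec_apply hv]
    exact quadratic_form ▸ fderiv_fderiv_nonneg_of_isLocalMin hv hmin (WithLp.toLp 2 e)

lemma posSemidef_hessian_sub_of_isLocalMin {v w : En n → ℝ} {x : En n} (hv : ContDiffAt ℝ 2 v x)
    (hw : ContDiffAt ℝ 2 w x) (hmin : IsLocalMin (fun y => v y - w y) x) :
    (hessian v x - hessian w x).PosSemidef :=
  hessian_sub hv hw ▸ posSemidef_hessian_of_isLocalMin (hv.sub hw) hmin

end Hessian

section Gradient

open scoped Gradient

variable {n : ℕ}

lemma gradient_apply (v : En n → ℝ) (x : En n) (i : Fin n) :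
    ∇ v x i = fderiv ℝ v x (EuclideanSpace.single i 1) := by
  rw [← inner_gradient_left, EuclideanSpace.inner_single_right]
  simp

lemma hasFDerivAt_gradient {v : En n → ℝ} {x : En n} (hv : ContDiffAt ℝ 2 v x) :
    HasFDerivAt (∇ v) (Matrix.toEuclideanCLM (𝕜 := ℝ) (hessian v x)) x := by
  rw [← hasFDerivWithinAt_univ, hasFDerivWithinAt_euclidean]
  intro i
  simp only [gradient_apply]
  refine (((differentiableAt_fderiv_of_contDiffAt_two hv).hasFDerivAt.clm_apply
    (hasFDerivAt_const (EuclideanSpace.single i 1) x)).congr_fderiv ?_).hasFDerivWithinAt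
  ext e
  simpa using (hessian_mulVec_apply hv e i).symm

lemma hasGradientAt_comp_norm_sub_sq {F : Type*} [NormedAddCommGroup F] [InnerProductSpace ℝ F]
    [CompleteSpace F] {g : ℝ → ℝ} {g' : ℝ} {x : F} (z : F) (hg : HasDerivAt g g' (‖x - z‖ ^ 2)) :
    HasGradientAt (fun y => g (‖y - z‖ ^ 2)) ((2 * g') • (x - z)) x := by
  rw [hasGradientAt_iff_hasFDerivAt]
  refine (hg.comp_hasFDerivAt x ((hasFDerivAt_id x).sub_const z).norm_sq).congr_fderiv ?_
  ext e
  simp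
  ring

lemma hessian_comp_norm_sub_sq {g g' : ℝ → ℝ} {g'' : ℝ} {x z : En n}
    (hg : ∀ s, HasDerivAt g (g' s) s) (hg' : HasDerivAt g' g'' (‖x - z‖ ^ 2)) :
    hessian (fun y => g (‖y - z‖ ^ 2)) x =
      (2 * g' (‖x - z‖ ^ 2)) • (1 : Matrix (Fin n) (Fin n) ℝ) +
        (4 * g'') • Matrix.vecMulVec (x - z) (x - z) := by
  ext i j
  have fderiv_coord (y : En n) : fderiv ℝ (fun y => g (‖y - z‖ ^ 2)) y (EuclideanSpace.single i 1)
      = 2 * g' (‖y - z‖ ^ 2) * (y i - z i) := by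
    rw [← gradient_apply, (hasGradientAt_comp_norm_sub_sq z (hg (‖y - z‖ ^ 2))).gradient]
    simp
  have hasFDerivAt_g' := (hasGradientAt_comp_norm_sub_sq z hg').hasFDerivAt
  have hasFDerivAt_coord : HasFDerivAt (fun y : En n => y i - z i)
      (EuclideanSpace.proj i : En n →L[ℝ] ℝ) x :=
    (EuclideanSpace.proj i : En n →L[ℝ] ℝ).hasFDerivAt.sub_const (z i)
  rw [hessian, Matrix.of_apply, pd2]
  simp_rw [fderiv_coord]
  rw [((hasFDerivAt_g'.const_mul 2).fun_mul hasFDerivAt_coord).fderiv]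
  simp [Matrix.one_apply, Matrix.vecMulVec_apply, EuclideanSpace.inner_single_right]
  ring

lemma sum_mul_hessian_comp_norm_sub_sq {g g' : ℝ → ℝ} {g'' : ℝ} {x z : En n}
    (A : Matrix (Fin n) (Fin n) ℝ) (hg : ∀ s, HasDerivAt g (g' s) s)
    (hg' : HasDerivAt g' g'' (‖x - z‖ ^ 2)) :
    ∑ i, ∑ j, A i j * hessian (fun y => g (‖y - z‖ ^ 2)) x i j =
      2 * g' (‖x - z‖ ^ 2) * A.trace +
        4 * g'' * ∑ i, ∑ j, A i j * (x - z) i * (x - z) j := by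
  rw [hessian_comp_norm_sub_sq hg hg']
  simp only [Matrix.add_apply, Matrix.smul_apply, Matrix.one_apply, Matrix.vecMulVec_apply,
    smul_eq_mul, mul_ite, mul_one, mul_zero, mul_add, Finset.sum_add_distrib, Finset.sum_ite_eq,
    Finset.mem_univ, if_true, Matrix.trace, Matrix.diag, Finset.mul_sum]
  congr 1
  · exact Finset.sum_congr rfl fun i _ => by ring
  · exact Finset.sum_congr rfl fun i _ => Finset.sum_congr rfl fun j _ => by ring

end Gradient

section Supersolutions

variable {n : ℕ} {Ω : Set (En n)} {lam Lam : ℝ} {u φ : En n → ℝ}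

/-- `u` is a `C²` supersolution on `Ω` of some equation in nondivergence form with ellipticity
constants `lam` and `Lam`. The coefficients are chosen pointwise, with no regularity in `x`, so this
is the class `S̄(lam, Lam)` of Caffarelli, restricted to `C²` functions. -/
structure IsSupersolutionOn (Ω : Set (En n)) (lam Lam : ℝ) (u : En n → ℝ) : Prop where
  contDiffOn : ContDiffOn ℝ 2 u Ω
  exists_coeff : ∀ x ∈ Ω, ∃ A : Matrix (Fin n) (Fin n) ℝ, IsElliptic lam Lam A ∧
    ∑ i, ∑ j, A i j * hessian u x i j ≤ 0

lemma IsSupersolutionOn.contDiffAt (hu : IsSupersolutionOn Ω lam Lam u) (hΩ : IsOpen Ω)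
    {x : En n} (hx : x ∈ Ω) : ContDiffAt ℝ 2 u x :=
  hu.contDiffOn.contDiffAt (hΩ.mem_nhds hx)

lemma IsSupersolutionOn.exists_coeff_of_isLocalMin_sub (hu : IsSupersolutionOn Ω lam Lam u)
    (hΩ : IsOpen Ω) {x : En n} (hx : x ∈ Ω) (hφ : ContDiffAt ℝ 2 φ x)
    (hmin : IsLocalMin (fun y => u y - φ y) x) :
    ∃ A : Matrix (Fin n) (Fin n) ℝ, IsElliptic lam Lam A ∧
      lam * (hessian u x - hessian φ x).trace + ∑ i, ∑ j, A i j * hessian φ x i j ≤ 0 := by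
  obtain ⟨A, hA, hAu⟩ := hu.exists_coeff x hx
  have trace_le :=
    hA.mul_trace_le (posSemidef_hessian_sub_of_isLocalMin (hu.contDiffAt hΩ hx) hφ hmin)
  simp only [Matrix.sub_apply, mul_sub, Finset.sum_sub_distrib] at trace_le
  exact ⟨A, hA, by linarith⟩

lemma IsSupersolutionOn.not_isLocalMin_sub (hu : IsSupersolutionOn Ω lam Lam u) (hΩ : IsOpen Ω)
    (hlam : 0 ≤ lam) {x : En n} (hx : x ∈ Ω) (hφ : ContDiffAt ℝ 2 φ x)
    (hsub : ∀ A, IsElliptic lam Lam A → 0 < ∑ i, ∑ j, A i j * hessian φ x i j) :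
    ¬ IsLocalMin (fun y => u y - φ y) x := by
  intro hmin
  obtain ⟨A, hA, hle⟩ := hu.exists_coeff_of_isLocalMin_sub hΩ hx hφ hmin
  have psd := posSemidef_hessian_sub_of_isLocalMin (hu.contDiffAt hΩ hx) hφ hmin
  linarith [hsub A hA, mul_nonneg hlam psd.trace_nonneg]

lemma IsSupersolutionOn.le_of_strict_subsolution (hu : IsSupersolutionOn Ω lam Lam u)
    (hΩ : IsOpen Ω) (hlam : 0 ≤ lam) {K U : Set (En n)} (hK : IsCompact K) (hKΩ : K ⊆ Ω)
    (hU : IsOpen U) (hUK : U ⊆ K) (hφ : ContDiff ℝ 2 φ)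
    (hsub : ∀ x ∈ U, ∀ A, IsElliptic lam Lam A → 0 < ∑ i, ∑ j, A i j * hessian φ x i j)
    (hbdry : ∀ x ∈ K \ U, φ x ≤ u x) {x : En n} (hx : x ∈ K) : φ x ≤ u x := by
  obtain ⟨y, hyK, hy⟩ := hK.exists_isMinOn ⟨x, hx⟩
    ((hu.contDiffOn.continuousOn.mono hKΩ).sub hφ.continuous.continuousOn)
  have hyU : y ∉ U := fun hyU => hu.not_isLocalMin_sub hΩ hlam (hKΩ hyK) hφ.contDiffAt (hsub y hyU)
    (hy.isLocalMin (mem_of_superset (hU.mem_nhds hyU) hUK))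
  linarith [hbdry y ⟨hyK, hyU⟩, show u y - φ y ≤ u x - φ x from hy hx]

end Supersolutions

section Barrier

variable {n : ℕ} {Ω : Set (En n)} {lam Lam : ℝ} {u : En n → ℝ}

/-- The barrier of height `c` centred at `z`, vanishing on the sphere of radius `R` around `z`. For
a large exponent it is a strict subsolution outside the ball of radius `R / 4`. -/
def barrier (c R : ℝ) (k : ℕ) (z x : En n) : ℝ := c * (1 - ‖x - z‖ ^ 2 / R ^ 2) ^ (k + 2)

lemma contDiff_barrier (c R : ℝ) (k : ℕ) (z : En n) : ContDiff ℝ 2 (barrier c R k z) := by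
  have : ContDiff ℝ 2 fun x : En n => ‖x - z‖ ^ 2 := (contDiff_id.sub contDiff_const).norm_sq ℝ
  unfold barrier
  fun_prop

lemma hasDerivAt_one_sub_div_pow (R : ℝ) (m : ℕ) (s : ℝ) :
    HasDerivAt (fun s => (1 - s / R ^ 2) ^ (m + 1))
      (-((m + 1) / R ^ 2) * (1 - s / R ^ 2) ^ m) s := by
  refine ((((hasDerivAt_id s).div_const (R ^ 2)).const_sub 1).pow (m + 1)).congr_deriv ?_
  simp
  ring

lemma sum_mul_hessian_barrier (c R : ℝ) (k : ℕ) (z x : En n) (A : Matrix (Fin n) (Fin n) ℝ) :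
    ∑ i, ∑ j, A i j * hessian (barrier c R k z) x i j =
      2 * c * (k + 2) / R ^ 2 * (1 - ‖x - z‖ ^ 2 / R ^ 2) ^ k *
        (2 * (k + 1) / R ^ 2 * ∑ i, ∑ j, A i j * (x - z) i * (x - z) j -
          (1 - ‖x - z‖ ^ 2 / R ^ 2) * A.trace) := by
  have hasDerivAt_profile (s : ℝ) :=
    (hasDerivAt_one_sub_div_pow R (k + 1) s).const_mul c
  have hasDerivAt_profile' := ((hasDerivAt_one_sub_div_pow R k (‖x - z‖ ^ 2)).const_mul
    (-(((k + 1 : ℕ) + 1) / R ^ 2))).const_mul c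
  refine (sum_mul_hessian_comp_norm_sub_sq A hasDerivAt_profile hasDerivAt_profile').trans ?_
  push_cast
  ring

lemma sum_mul_hessian_barrier_pos (hlam : 0 < lam) (hLam : 0 ≤ Lam) {k : ℕ}
    (hk : 8 * (n * Lam) ≤ (k + 1) * lam) {c R : ℝ} (hc : 0 < c) (hR : 0 < R) {z x : En n}
    (hx : R / 4 < ‖x - z‖) (hxR : ‖x - z‖ < R) {A : Matrix (Fin n) (Fin n) ℝ}
    (hA : IsElliptic lam Lam A) : 0 < ∑ i, ∑ j, A i j * hessian (barrier c R k z) x i j := by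
  set θ := ‖x - z‖ ^ 2 / R ^ 2 with hθ
  have lt_θ : 1 / 16 < θ := by
    rw [hθ, lt_div_iff₀ (by positivity)]
    nlinarith
  have θ_lt_one : θ < 1 := (div_lt_one (by positivity)).2 (by gcongr)
  have quadratic_ge : lam * θ ≤ (∑ i, ∑ j, A i j * (x - z) i * (x - z) j) / R ^ 2 := by
    rw [hθ, ← mul_div_assoc, EuclideanSpace.real_norm_sq_eq]
    gcongr
    exact (hA (x - z)).1
  have trace_le : (1 - θ) * A.trace ≤ n * Lam := calc
    (1 - θ) * A.trace ≤ (1 - θ) * (n * Lam) :=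
      mul_le_mul_of_nonneg_left (by simpa using hA.trace_le) (by linarith)
    _ ≤ n * Lam := mul_le_of_le_one_left (by positivity) (by linarith)
  rw [sum_mul_hessian_barrier]
  have : 0 < 1 - θ := by linarith
  refine mul_pos (by positivity) (sub_pos.2 ?_)
  calc (1 - θ) * A.trace ≤ 2 * ((k + 1) * lam) * (1 / 16) := by linarith
    _ < 2 * ((k + 1) * lam) * θ := by gcongr
    _ = 2 * (k + 1) * (lam * θ) := by ring
    _ ≤ 2 * (k + 1) * ((∑ i, ∑ j, A i j * (x - z) i * (x - z) j) / R ^ 2) := by gcongr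
    _ = _ := by ring

lemma barrier_le_of_le_one {c R : ℝ} (hc : 0 ≤ c) (k : ℕ) {z x : En n}
    (hx : ‖x - z‖ ^ 2 / R ^ 2 ≤ 1) : barrier c R k z x ≤ c :=
  mul_le_of_le_one_right hc (pow_le_one₀ (by linarith) (sub_le_self _ (by positivity)))

lemma mul_three_quarters_pow_le_barrier {c R : ℝ} (hc : 0 ≤ c) (hR : 0 < R) (k : ℕ) {z x : En n}
    (hx : dist x z ≤ R / 2) : c * (3 / 4) ^ (k + 2) ≤ barrier c R k z x := by
  have : ‖x - z‖ ^ 2 / R ^ 2 ≤ 1 / 4 := by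
    rw [← dist_eq_norm, div_le_iff₀ (by positivity)]
    nlinarith [dist_nonneg (x := x) (y := z)]
  unfold barrier
  gcongr
  linarith

lemma IsSupersolutionOn.barrier_le (hu : IsSupersolutionOn Ω lam Lam u) (hΩ : IsOpen Ω)
    (hlam : 0 < lam) (hLam : 0 ≤ Lam) (hu₀ : ∀ x ∈ Ω, 0 ≤ u x) {k : ℕ}
    (hk : 8 * (n * Lam) ≤ (k + 1) * lam) {R : ℝ} (hR : 0 < R) {z : En n}
    (hball : closedBall z R ⊆ Ω) {c : ℝ} (hc : 0 < c) (hcu : ∀ y ∈ closedBall z (R / 4), c ≤ u y)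
    {x : En n} (hx : x ∈ closedBall z R) : barrier c R k z x ≤ u x := by
  refine hu.le_of_strict_subsolution hΩ hlam.le (isCompact_closedBall z R) hball
    (U := ball z R \ closedBall z (R / 4)) (isOpen_ball.sdiff isClosed_closedBall)
    (sdiff_subset.trans ball_subset_closedBall) (contDiff_barrier c R k z) ?_ ?_ hx
  · intro y hy A hA
    rw [Set.mem_sdiff, mem_ball, mem_closedBall, not_le, dist_eq_norm] at hy
    exact sum_mul_hessian_barrier_pos hlam hLam hk hc hR hy.2 hy.1 hA
  · rintro y ⟨hyR, hy⟩
    have norm_le : ‖y - z‖ ≤ R := mem_closedBall_iff_norm.1 hyR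
    by_cases hy_inner : y ∈ closedBall z (R / 4)
    · exact (barrier_le_of_le_one hc.le k ((div_le_one (by positivity)).2 (by gcongr))).trans
        (hcu y hy_inner)
    · have norm_eq : ‖y - z‖ = R := norm_le.antisymm <| by
        simpa [hy_inner, dist_eq_norm] using hy
      simpa [barrier, norm_eq, hR.ne'] using hu₀ y (hball hyR)

lemma IsSupersolutionOn.exists_le_pow_mul (hu : IsSupersolutionOn Ω lam Lam u) (hΩ : IsOpen Ω)
    (hlam : 0 < lam) (hLam : 0 ≤ Lam) (hu₀ : ∀ x ∈ Ω, 0 ≤ u x) {k : ℕ}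
    (hk : 8 * (n * Lam) ≤ (k + 1) * lam) {R : ℝ} (hR : 0 < R) {z x : En n}
    (hball : closedBall z R ⊆ Ω) (hx : dist x z ≤ R / 2) :
    ∃ y ∈ closedBall z (R / 4), u y ≤ (4 / 3) ^ (k + 2) * u x := by
  have inner_subset : closedBall z (R / 4) ⊆ Ω :=
    (closedBall_subset_closedBall (by linarith)).trans hball
  have hxR : x ∈ closedBall z R := mem_closedBall.2 (by linarith)
  have hux : 0 ≤ u x := hu₀ x (hball hxR)
  obtain ⟨y, hy, hymin⟩ := (isCompact_closedBall z (R / 4)).exists_isMinOn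
    (nonempty_closedBall.2 (by positivity)) (hu.contDiffOn.continuousOn.mono inner_subset)
  refine ⟨y, hy, ?_⟩
  obtain uy_zero | uy_pos := (hu₀ y (inner_subset hy)).eq_or_lt
  · rw [← uy_zero]
    positivity
  calc u y = (4 / 3) ^ (k + 2) * (u y * (3 / 4) ^ (k + 2)) := by
        rw [mul_left_comm, ← mul_pow]
        norm_num
    _ ≤ (4 / 3) ^ (k + 2) * barrier (u y) R k z x := by
        gcongr
        exact mul_three_quarters_pow_le_barrier uy_pos.le hR k hx
    _ ≤ (4 / 3) ^ (k + 2) * u x := by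
        gcongr
        exact hu.barrier_le hΩ hlam hLam hu₀ hk hR hball uy_pos hymin hxR

lemma exists_mem_segment_dist_le {E : Type*} [SeminormedAddCommGroup E] [NormedSpace ℝ E] {x z : E}
    {a b : ℝ} (ha : 0 ≤ a) (hb : 0 < b) (h : dist x z ≤ a + b) :
    ∃ y ∈ segment ℝ x z, dist x y ≤ a ∧ dist y z ≤ b := by
  have one_sub : 1 - a / (a + b) = b / (a + b) := by
    field_simp
    ring
  refine ⟨AffineMap.lineMap x z (a / (a + b)), segment_eq_image_lineMap ℝ x z ▸
    mem_image_of_mem _ ⟨by positivity, (div_le_one (by positivity)).2 (by linarith)⟩, ?_, ?_⟩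
  · rw [dist_left_lineMap, Real.norm_of_nonneg (by positivity), div_mul_eq_mul_div]
    exact (div_le_iff₀ (by positivity)).2 (by gcongr)
  · rw [dist_lineMap_right, one_sub, Real.norm_of_nonneg (by positivity), div_mul_eq_mul_div]
    exact (div_le_iff₀ (by positivity)).2 (by gcongr)

lemma IsSupersolutionOn.exists_le_pow_mul_of_convex (hu : IsSupersolutionOn Ω lam Lam u)
    (hΩ : IsOpen Ω) (hlam : 0 < lam) (hLam : 0 ≤ Lam) (hu₀ : ∀ x ∈ Ω, 0 ≤ u x) {k : ℕ}
    (hk : 8 * (n * Lam) ≤ (k + 1) * lam) {R : ℝ} (hR : 0 < R) {S : Set (En n)} (hS : Convex ℝ S)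
    (hball : ∀ z ∈ S, closedBall z R ⊆ Ω) {x z : En n} (hx : x ∈ S) (hz : z ∈ S) {N : ℕ}
    (hxz : dist x z ≤ N * (R / 4)) :
    ∃ y ∈ closedBall z (R / 4), u y ≤ ((4 / 3) ^ (k + 2)) ^ N * u x := by
  induction N generalizing z with
  | zero =>
    obtain rfl : x = z := dist_le_zero.1 (by simpa using hxz)
    exact ⟨x, mem_closedBall_self (by positivity), by simp⟩
  | succ N ih =>
    have hxz' : dist x z ≤ N * (R / 4) + R / 4 := by
      push_cast at hxz
      linarith
    obtain ⟨w, hw, dist_x_w, dist_w_z⟩ :=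
      exists_mem_segment_dist_le (by positivity) (by positivity) hxz'
    obtain ⟨y', hy', hxy'⟩ := ih (hS.segment_subset hx hz hw) dist_x_w
    obtain ⟨y, hy, hyy'⟩ := hu.exists_le_pow_mul hΩ hlam hLam hu₀ hk hR (hball z hz) (x := y')
      (by linarith [dist_triangle y' w z, mem_closedBall.1 hy'])
    refine ⟨y, hy, hyy'.trans ?_⟩
    rw [pow_succ' ((4 / 3 : ℝ) ^ (k + 2)) N, mul_assoc]
    gcongr

end Barrier

section SlidingParaboloids

open scoped Gradient

variable {n : ℕ} {Ω : Set (En n)} {lam Lam : ℝ} {u : En n → ℝ}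

lemma exists_isLocalMin_add_paraboloid {E : Type*} [NormedAddCommGroup E] [NormedSpace ℝ E]
    [ProperSpace E] {u : E → ℝ} {c y : E} {d t : ℝ} (hd : 0 < d) (ht : 0 < t)
    (hcont : ContinuousOn u (closedBall c d)) (hu₀ : ∀ x ∈ closedBall c d, 0 ≤ u x)
    (huc : u c ≤ t) (hy : y ∈ ball c (d / 4)) :
    ∃ x ∈ ball c d, u x ≤ 2 * t ∧ IsLocalMin (fun z => u z + 4 * t / d ^ 2 * ‖z - y‖ ^ 2) x := by
  set β := 4 * t / d ^ 2
  have β_pos : 0 < β := by positivity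
  have β_mul : β * d ^ 2 = 4 * t := div_mul_cancel₀ _ (by positivity)
  have hc : c ∈ closedBall c d := mem_closedBall_self hd.le
  obtain ⟨x, hx, hxmin⟩ := (isCompact_closedBall c d).exists_isMinOn ⟨c, hc⟩
    (hcont.add (f := u) (g := fun z => β * ‖z - y‖ ^ 2) (by fun_prop))
  have x_le_c : u x + β * ‖x - y‖ ^ 2 ≤ u c + β * ‖c - y‖ ^ 2 := hxmin hc
  have paraboloid_c_le : β * ‖c - y‖ ^ 2 ≤ t / 4 := calc
    β * ‖c - y‖ ^ 2 ≤ β * (d / 4) ^ 2 := by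
      gcongr
      exact (mem_ball_iff_norm'.1 hy).le
    _ = t / 4 := by linear_combination β_mul / 16
  have paraboloid_nonneg : 0 ≤ β * ‖x - y‖ ^ 2 := by positivity
  have dist_x_lt : dist x c < d := by
    by_contra! hge
    have dist_x_y : 3 / 4 * d ≤ ‖x - y‖ := by
      rw [← dist_eq_norm]
      linarith [dist_triangle x y c, mem_ball.1 hy]
    have paraboloid_x_ge : 9 / 4 * t ≤ β * ‖x - y‖ ^ 2 := calc
      9 / 4 * t = β * (3 / 4 * d) ^ 2 := by linear_combination -9 / 16 * β_mul
      _ ≤ β * ‖x - y‖ ^ 2 := by gcongr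
    linarith [hu₀ x hx]
  exact ⟨x, dist_x_lt, by linarith, hxmin.isLocalMin
    (mem_of_superset (isOpen_ball.mem_nhds dist_x_lt) ball_subset_closedBall)⟩

lemma hessian_neg_paraboloid (β : ℝ) (x y : En n) :
    hessian (fun z => -β * ‖z - y‖ ^ 2) x = (-(2 * β)) • (1 : Matrix (Fin n) (Fin n) ℝ) := by
  have hasDerivAt_linear (s : ℝ) : HasDerivAt (fun s => -β * s) (-β) s := by
    simpa using (hasDerivAt_id s).const_mul (-β)
  rw [hessian_comp_norm_sub_sq hasDerivAt_linear (hasDerivAt_const _ _)]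
  simp

lemma add_smul_gradient_eq_of_isLocalMin {F : Type*} [NormedAddCommGroup F]
    [InnerProductSpace ℝ F] [CompleteSpace F] {u : F → ℝ} {x y : F} {β : ℝ} (hβ : β ≠ 0)
    (hu : DifferentiableAt ℝ u x) (hmin : IsLocalMin (fun z => u z + β * ‖z - y‖ ^ 2) x) :
    x + (2 * β)⁻¹ • ∇ u x = y := by
  have hasDerivAt_linear : HasDerivAt (fun s => β * s) β (‖x - y‖ ^ 2) := by
    simpa using (hasDerivAt_id (‖x - y‖ ^ 2)).const_mul β
  have gradient_sum := hu.hasGradientAt.hasFDerivAt.add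
    (hasGradientAt_comp_norm_sub_sq y hasDerivAt_linear).hasFDerivAt
  have sum_eq_zero : ∇ u x + (2 * β) • (x - y) = 0 := by
    simpa only [← map_add, map_eq_zero_iff _ (LinearIsometryEquiv.injective _)] using
      hmin.hasFDerivAt_eq_zero gradient_sum
  rw [eq_neg_of_add_eq_zero_left sum_eq_zero, smul_neg, inv_smul_smul₀ (by positivity)]
  abel

lemma IsSupersolutionOn.abs_one_add_smul_hessian_le (hu : IsSupersolutionOn Ω lam Lam u)
    (hΩ : IsOpen Ω) (hlam : 0 < lam) {x y : En n} (hx : x ∈ Ω) {β : ℝ} (hβ : 0 < β)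
    (hmin : IsLocalMin (fun z => u z + β * ‖z - y‖ ^ 2) x) (i j : Fin n) :
    |(1 + (2 * β)⁻¹ • hessian u x) i j| ≤ n * Lam / lam := by
  have contDiff_paraboloid : ContDiffAt ℝ 2 (fun z => -β * ‖z - y‖ ^ 2) x :=
    contDiffAt_const.mul ((contDiffAt_id.sub contDiffAt_const).norm_sq ℝ)
  replace hmin : IsLocalMin (fun z => u z - -β * ‖z - y‖ ^ 2) x := by
    simpa only [neg_mul, sub_neg_eq_add] using hmin
  obtain ⟨A, hA, trace_le⟩ := hu.exists_coeff_of_isLocalMin_sub hΩ hx contDiff_paraboloid hmin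
  have psd := posSemidef_hessian_sub_of_isLocalMin (hu.contDiffAt hΩ hx) contDiff_paraboloid hmin
  have sum_paraboloid : ∑ i, ∑ j, A i j * hessian (fun z => -β * ‖z - y‖ ^ 2) x i j =
      -(2 * β) * A.trace := by
    rw [hessian_neg_paraboloid]
    simp [Matrix.one_apply, Matrix.trace, Finset.mul_sum, mul_comm]
  rw [sum_paraboloid] at trace_le
  set W := hessian u x - hessian (fun z => -β * ‖z - y‖ ^ 2) x with hW
  have matrix_eq : 1 + (2 * β)⁻¹ • hessian u x = (2 * β)⁻¹ • W := by
    rw [hW, hessian_neg_paraboloid, neg_smul, sub_neg_eq_add, smul_add,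
      inv_smul_smul₀ (by positivity), add_comm]
  rw [matrix_eq, Matrix.smul_apply, smul_eq_mul, abs_mul, abs_of_pos (by positivity),
    inv_mul_le_iff₀ (by positivity), ← mul_div_assoc, le_div_iff₀ hlam]
  calc |W i j| * lam ≤ lam * W.trace := by
        rw [mul_comm]
        gcongr
        exact abs_apply_le_trace_of_posSemidef psd i j
    _ ≤ 2 * β * A.trace := by linarith
    _ ≤ 2 * β * (n * Lam) := by
        gcongr
        simpa using hA.trace_le

lemma volume_image_le_of_abs_apply_le {f : En n → En n} {M : En n → Matrix (Fin n) (Fin n) ℝ}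
    {T : Set (En n)} {K : ℝ} (hT : MeasurableSet T)
    (hf : ∀ x ∈ T, HasFDerivWithinAt f (Matrix.toEuclideanCLM (𝕜 := ℝ) (M x)) T x)
    (hM : ∀ x ∈ T, ∀ i j, |M x i j| ≤ K) :
    volume (f '' T) ≤ ENNReal.ofReal (n.factorial * K ^ n) * volume T := by
  have det_eq (x : En n) : (Matrix.toEuclideanCLM (𝕜 := ℝ) (M x)).det = (M x).det :=
    LinearMap.det_toLpLin 2 (M x)
  have abs_det_le (x : En n) (hx : x ∈ T) : |(M x).det| ≤ n.factorial * K ^ n := by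
    simpa using Matrix.det_le (abv := AbsoluteValue.abs) (hM x hx)
  calc volume (f '' T)
      ≤ ∫⁻ x in T, ENNReal.ofReal |(Matrix.toEuclideanCLM (𝕜 := ℝ) (M x)).det| :=
        addHaar_image_le_lintegral_abs_det_fderiv volume hT hf
    _ ≤ ∫⁻ _x in T, ENNReal.ofReal (n.factorial * K ^ n) :=
        setLIntegral_mono measurable_const fun x hx =>
          ENNReal.ofReal_le_ofReal (det_eq x ▸ abs_det_le x hx)
    _ = ENNReal.ofReal (n.factorial * K ^ n) * volume T := setLIntegral_const _ _

lemma measurableSet_inter_setOf_le {X : Type*} [TopologicalSpace X] [MeasurableSpace X]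
    [OpensMeasurableSpace X] {f : X → ℝ} {U : Set X} (hU : IsOpen U) (hf : ContinuousOn f U)
    (t : ℝ) : MeasurableSet (U ∩ {x | f x ≤ t}) := by
  have : U ∩ {x | f x ≤ t} = U \ (U ∩ f ⁻¹' Ioi t) := by
    ext x
    simp
  rw [this]
  exact hU.measurableSet.diff (hf.isOpen_inter_preimage hU isOpen_Ioi).measurableSet

lemma measurableSet_setOf_abs_one_add_smul_hessian_le (u : En n → ℝ) (b K : ℝ) :
    MeasurableSet {x | ∀ i j, |(1 + b • hessian u x) i j| ≤ K} := by
  simp only [ofPred_forall]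
  refine MeasurableSet.iInter fun i => MeasurableSet.iInter fun j =>
    measurableSet_le ?_ measurable_const
  have : Measurable fun x => hessian u x i j := measurable_fderiv_apply_const ℝ _ _
  simp only [Matrix.add_apply, Matrix.smul_apply, smul_eq_mul]
  fun_prop

lemma IsSupersolutionOn.volume_ball_le_mul_sublevel (hu : IsSupersolutionOn Ω lam Lam u)
    (hΩ : IsOpen Ω) (hlam : 0 < lam) (hLam : 0 ≤ Lam) (hu₀ : ∀ x ∈ Ω, 0 ≤ u x) {c : En n}
    {d t : ℝ} (hd : 0 < d) (hball : closedBall c d ⊆ Ω) (ht : 0 < t) (huc : u c ≤ t) :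
    volume.real (ball c (d / 4)) ≤
      n.factorial * (n * Lam / lam) ^ n * volume.real (ball c d ∩ {x | u x ≤ 2 * t}) := by
  set β := 4 * t / d ^ 2
  have β_pos : 0 < β := by positivity
  have ball_subset : ball c d ⊆ Ω := ball_subset_closedBall.trans hball
  set sublevel := ball c d ∩ {x | u x ≤ 2 * t}
  -- `y` is recovered from the point where the paraboloid with vertex `y` touches `u` from below.
  let vertex (x : En n) : En n := x + (2 * β)⁻¹ • ∇ u x
  set T := sublevel ∩ {x | ∀ i j, |(1 + (2 * β)⁻¹ • hessian u x) i j| ≤ n * Lam / lam}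
  have measurableSet_T : MeasurableSet T :=
    (measurableSet_inter_setOf_le isOpen_ball (hu.contDiffOn.continuousOn.mono ball_subset) _).inter
      (measurableSet_setOf_abs_one_add_smul_hessian_le u _ _)
  have hasFDerivAt_vertex (x : En n) (hx : x ∈ T) : HasFDerivWithinAt vertex
      (Matrix.toEuclideanCLM (𝕜 := ℝ) (1 + (2 * β)⁻¹ • hessian u x)) T x := by
    rw [map_add, map_one, map_smul]
    exact ((hasFDerivAt_id x).add ((hasFDerivAt_gradient
      (hu.contDiffAt hΩ (ball_subset hx.1.1))).const_smul (2 * β)⁻¹)).hasFDerivWithinAt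
  have ball_subset_image : ball c (d / 4) ⊆ vertex '' T := by
    intro y hy
    obtain ⟨x, hx, hux, hmin⟩ := exists_isLocalMin_add_paraboloid hd ht
      (hu.contDiffOn.continuousOn.mono hball) (fun x hx => hu₀ x (hball hx)) huc hy
    have hxΩ := ball_subset hx
    exact ⟨x, ⟨⟨hx, hux⟩, hu.abs_one_add_smul_hessian_le hΩ hlam hxΩ β_pos hmin⟩,
      add_smul_gradient_eq_of_isLocalMin β_pos.ne'
        ((hu.contDiffAt hΩ hxΩ).differentiableAt (by norm_num)) hmin⟩
  set K : ℝ := n.factorial * (n * Lam / lam) ^ n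
  have volume_le : volume (ball c (d / 4)) ≤ ENNReal.ofReal K * volume sublevel := calc
    volume (ball c (d / 4)) ≤ volume (vertex '' T) := measure_mono ball_subset_image
    _ ≤ ENNReal.ofReal K * volume T :=
        volume_image_le_of_abs_apply_le measurableSet_T hasFDerivAt_vertex fun x hx => hx.2
    _ ≤ ENNReal.ofReal K * volume sublevel := by
        gcongr
        exact inter_subset_left
  have volume_ne_top : volume sublevel ≠ ⊤ :=
    measure_ne_top_of_subset inter_subset_left measure_ball_lt_top.ne
  have K_nonneg : 0 ≤ K := by positivity
  simpa [measureReal_def, ENNReal.toReal_ofReal K_nonneg]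
    using ENNReal.toReal_mono (ENNReal.mul_ne_top ENNReal.ofReal_ne_top volume_ne_top) volume_le

end SlidingParaboloids

section Cubes

variable {n : ℕ}

lemma isOpen_cube (n : ℕ) (r : ℝ) : IsOpen (cube n r) := by
  simp only [cube, ofPred_forall]
  exact isOpen_iInter_of_finite fun i => isOpen_lt (by fun_prop) continuous_const

lemma convex_cube (n : ℕ) (r : ℝ) : Convex ℝ (cube n r) := by
  simp only [cube, ofPred_forall]
  exact convex_iInter fun i => by
    simpa only [ball_zero_eq, Real.norm_eq_abs] using!
      (convex_ball (0 : ℝ) (r / 2)).linear_preimage (EuclideanSpace.projₗ i)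

lemma abs_apply_sub_apply_le_dist (x y : En n) (i : Fin n) : |x i - y i| ≤ dist x y := by
  simpa only [dist_eq_norm] using! PiLp.norm_apply_le (x - y) i

lemma dist_le_of_abs_apply_sub_apply_le {x y : En n} {δ : ℝ} (hδ : 0 ≤ δ)
    (h : ∀ i, |x i - y i| ≤ δ) : dist x y ≤ n * δ := by
  rw [EuclideanSpace.dist_eq, Real.sqrt_le_left (by positivity)]
  calc ∑ i, dist (x i) (y i) ^ 2 ≤ ∑ _i : Fin n, δ ^ 2 :=
        Finset.sum_le_sum fun i _ => pow_le_pow_left₀ dist_nonneg (h i) 2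
    _ = n * δ ^ 2 := by simp
    _ ≤ (n * δ) ^ 2 := by
        rw [mul_pow]
        gcongr
        exact_mod_cast Nat.le_self_pow two_ne_zero n

lemma closedBall_subset_cube {r R : ℝ} {z : En n} (hz : z ∈ cube n r) :
    closedBall z R ⊆ cube n (r + 2 * R) := by
  intro x hx i
  have := abs_add_le (x i - z i) (z i)
  have := (abs_apply_sub_apply_le_dist x z i).trans hx
  have := hz i
  rw [sub_add_cancel] at *
  linarith

/-- The half-open cube `∏ i, [c i - r, c i + r)` with centre `c` and side length `2 * r`;
half-open cubes can be bisected into disjoint half-open cubes. -/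
def halfOpenCube (c : En n) (r : ℝ) : Set (En n) := {x | ∀ i, x i ∈ Ico (c i - r) (c i + r)}

lemma halfOpenCube_eq_preimage (c : En n) (r : ℝ) :
    halfOpenCube c r = WithLp.ofLp ⁻¹' univ.pi fun i => Ico (c i - r) (c i + r) := by
  ext x
  simp [halfOpenCube]

lemma measurableSet_halfOpenCube (c : En n) (r : ℝ) : MeasurableSet (halfOpenCube c r) := by
  rw [halfOpenCube_eq_preimage]
  exact (MeasurableSet.univ_pi fun i => measurableSet_Ico).preimage
    (PiLp.volume_preserving_ofLp (Fin n)).measurable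

lemma volume_halfOpenCube (c : En n) {r : ℝ} (hr : 0 ≤ r) :
    volume.real (halfOpenCube c r) = (2 * r) ^ n := by
  rw [halfOpenCube_eq_preimage, measureReal_def,
    (PiLp.volume_preserving_ofLp (Fin n)).measure_preimage
      (MeasurableSet.univ_pi fun i => measurableSet_Ico).nullMeasurableSet,
    Real.volume_pi_Ico_toReal fun i => by linarith]
  simp [two_mul]

lemma abs_apply_sub_le_of_mem_halfOpenCube {c x : En n} {r : ℝ} (hx : x ∈ halfOpenCube c r)
    (i : Fin n) : |x i - c i| ≤ r :=
  abs_sub_le_iff.2 ⟨by linarith [(hx i).2], by linarith [(hx i).1]⟩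

lemma ball_subset_halfOpenCube (c : En n) (r : ℝ) : ball c r ⊆ halfOpenCube c r := by
  intro x hx i
  have := abs_lt.1 ((abs_apply_sub_apply_le_dist x c i).trans_lt hx)
  exact ⟨by linarith, by linarith⟩

lemma cube_subset_halfOpenCube (n : ℕ) (r : ℝ) : cube n r ⊆ halfOpenCube 0 (r / 2) := by
  intro x hx i
  have := abs_lt.1 (hx i)
  exact ⟨by simpa using this.1.le, by simpa using this.2⟩

lemma halfOpenCube_subset_cube {r s : ℝ} (hrs : 2 * r < s) :
    halfOpenCube (0 : En n) r ⊆ cube n s := by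
  intro x hx i
  have := abs_apply_sub_le_of_mem_halfOpenCube hx i
  rw [PiLp.zero_apply, sub_zero] at this
  linarith

lemma halfOpenCube_subset_closedBall (c : En n) {r : ℝ} (hr : 0 ≤ r) :
    halfOpenCube c r ⊆ closedBall c (n * r) :=
  fun _ hx => dist_le_of_abs_apply_sub_apply_le hr (abs_apply_sub_le_of_mem_halfOpenCube hx)

/-- The centre of one of the `2 ^ n` cubes of half side `r` into which the cube with centre `c` and
half side `2 * r` is bisected; `σ` selects the upper or lower half in each coordinate. -/
def childCenter (c : En n) (r : ℝ) (σ : Fin n → Bool) : En n :=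
  WithLp.toLp 2 fun i => if σ i then c i + r else c i - r

lemma iUnion_halfOpenCube_childCenter (c : En n) (r : ℝ) :
    ⋃ σ, halfOpenCube (childCenter c r σ) r = halfOpenCube c (2 * r) := by
  ext x
  simp only [mem_iUnion, halfOpenCube, childCenter, Set.mem_ofPred_eq, mem_Ico]
  refine ⟨fun ⟨σ, hσ⟩ i => ?_, fun hx => ⟨fun i => decide (c i ≤ x i), fun i => ?_⟩⟩
  · have := hσ i
    split_ifs at this <;> constructor <;> linarith
  · have := hx i
    by_cases h : c i ≤ x i
    · simp only [h, decide_true, if_true]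
      constructor <;> linarith
    · simp only [h, decide_false, Bool.false_eq_true, if_false]
      constructor <;> linarith

lemma pairwise_disjoint_halfOpenCube_childCenter (c : En n) (r : ℝ) :
    Pairwise (Function.onFun Disjoint fun σ => halfOpenCube (childCenter c r σ) r) := by
  intro σ τ hστ
  obtain ⟨i, hi⟩ := Function.ne_iff.1 hστ
  refine Set.disjoint_left.2 fun x hσ hτ => hi ?_
  have hσi := hσ i
  have hτi := hτ i
  simp only [childCenter, mem_Ico] at hσi hτi
  cases hσ' : σ i <;> cases hτ' : τ i <;> simp_all <;> linarith

lemma abs_apply_sub_childCenter (c : En n) {r : ℝ} (hr : 0 ≤ r) (σ : Fin n → Bool) (i : Fin n) :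
    |c i - childCenter c r σ i| = r := by
  simp only [childCenter]
  split_ifs <;> simp [abs_of_nonneg hr]

lemma exists_isCompact_halfOpenCube_subset (n : ℕ) {r s : ℝ} (hrs : 2 * r < s) :
    ∃ K, IsCompact K ∧ halfOpenCube (0 : En n) r ⊆ K ∧ K ⊆ cube n s := by
  refine ⟨WithLp.toLp 2 '' univ.pi fun _ => Icc (-r) r,
    (isCompact_univ_pi fun _ => isCompact_Icc).image (PiLp.continuous_toLp 2 _),
    fun x hx => ⟨x.ofLp, fun i _ => ?_, rfl⟩, ?_⟩
  · simpa using abs_le.1 (abs_apply_sub_le_of_mem_halfOpenCube hx i)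
  · rintro _ ⟨x, hx, rfl⟩ i
    have := abs_le.2 (hx i (mem_univ i))
    simp only at this ⊢
    linarith

end Cubes

section Density

variable {n : ℕ} {lam Lam : ℝ} {Ω : Set (En n)} {u : En n → ℝ}

lemma volume_halfOpenCube_ne_top (c : En n) {r : ℝ} (hr : 0 ≤ r) :
    volume (halfOpenCube c r) ≠ ⊤ :=
  measure_ne_top_of_subset (halfOpenCube_subset_closedBall c hr) measure_closedBall_lt_top.ne

lemma volume_halfOpenCube_eq_mul_volume_ball (c x : En n) {r : ℝ} (hr : 0 < r) :
    volume.real (halfOpenCube c r) =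
      16 ^ n / volume.real (ball (0 : En n) 1) * volume.real (ball x (r / 8)) := by
  have volume_ball : volume.real (ball x (r / 8)) =
      (r / 8) ^ n * volume.real (ball (0 : En n) 1) := by
    rw [measureReal_def, Measure.addHaar_ball_of_pos _ _ (by positivity),
      finrank_euclideanSpace_fin, ENNReal.toReal_mul, ENNReal.toReal_ofReal (by positivity),
      measureReal_def]
  have volume_ball_pos : 0 < volume.real (ball (0 : En n) 1) :=
    ENNReal.toReal_pos (measure_ball_pos _ _ one_pos).ne' measure_ball_lt_top.ne
  rw [volume_halfOpenCube c hr.le, volume_ball]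
  field_simp
  rw [← mul_pow]
  ring_nf

lemma IsSupersolutionOn.volume_halfOpenCube_le_mul_sublevel (hu : IsSupersolutionOn Ω lam Lam u)
    (hΩ : IsOpen Ω) (hlam : 0 < lam) (hLam : 0 ≤ Lam) (hu₀ : ∀ x ∈ Ω, 0 ≤ u x) {c x : En n}
    {r t : ℝ} (hr : 0 < r) (hball : closedBall x (r / 2) ⊆ Ω) (hxc : dist x c ≤ r / 2)
    (ht : 0 < t) (hux : u x ≤ t) :
    volume.real (halfOpenCube c r) ≤
      16 ^ n / volume.real (ball (0 : En n) 1) * (n.factorial * (n * Lam / lam) ^ n) *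
        volume.real (halfOpenCube c r ∩ {x | u x ≤ 2 * t}) := by
  have ball_subset : ball x (r / 2) ⊆ halfOpenCube c r :=
    (ball_subset_ball' (by linarith)).trans (ball_subset_halfOpenCube c r)
  have volume_ball_le : volume.real (ball x (r / 2 / 4)) ≤
      n.factorial * (n * Lam / lam) ^ n * volume.real (ball x (r / 2) ∩ {x | u x ≤ 2 * t}) :=
    hu.volume_ball_le_mul_sublevel hΩ hlam hLam hu₀ (half_pos hr) hball ht hux
  rw [volume_halfOpenCube_eq_mul_volume_ball c x hr, mul_assoc _ (_ * _)]
  rw [div_div, show (2 : ℝ) * 4 = 8 by norm_num] at volume_ball_le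
  have := measure_ne_top_of_subset (μ := volume) (inter_subset_left (t := {x | u x ≤ 2 * t}))
    (volume_halfOpenCube_ne_top c hr.le)
  gcongr
  exact volume_ball_le.trans (by gcongr)

lemma IsSupersolutionOn.exists_closedBall_le_pow_mul (hu : IsSupersolutionOn (cube n 3) lam Lam u)
    (hlam : 0 < lam) (hLam : 0 ≤ Lam) (hu₀ : ∀ x ∈ cube n 3, 0 ≤ u x) {k : ℕ}
    (hk : 8 * (n * Lam) ≤ (k + 1) * lam) {x c : En n} (hx : x ∈ cube n 2) (hc : c ∈ cube n 2)
    {r : ℝ} (hr : 0 < r) (hr' : r ≤ 1 / 2) (hxc : ∀ i, |x i - c i| ≤ 3 * r) :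
    ∃ y ∈ closedBall c (r / 4), u y ≤ ((4 / 3) ^ (k + 2)) ^ (12 * n) * u x := by
  refine hu.exists_le_pow_mul_of_convex (isOpen_cube n 3) hlam hLam hu₀ hk hr (convex_cube n 2)
    (fun z hz => ?_) hx hc ?_
  · exact (closedBall_subset_closedBall hr').trans
      ((closedBall_subset_cube hz).trans_eq (by norm_num))
  · calc dist x c ≤ n * (3 * r) := dist_le_of_abs_apply_sub_apply_le (by positivity) hxc
      _ = (12 * n : ℕ) * (r / 4) := by
        push_cast
        ring

lemma measureReal_superlevel_le {α : Type*} [MeasurableSpace α] {μ : Measure α} {f : α → ℝ}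
    {Q : Set α} {t η : ℝ} (hmeas : MeasurableSet (Q ∩ {x | f x ≤ t})) (hQ : μ Q ≠ ⊤)
    (hη : η * μ.real Q ≤ μ.real (Q ∩ {x | f x ≤ t})) :
    μ.real (Q ∩ {x | t < f x}) ≤ (1 - η) * μ.real Q := by
  have split := measureReal_inter_add_sdiff (s := Q) hmeas hQ
  have sdiff_eq : Q \ (Q ∩ {x | f x ≤ t}) = Q ∩ {x | t < f x} := by
    ext x
    simp
  rw [sdiff_eq, ← inter_assoc, inter_self] at split
  linarith

/-- The two properties of nonnegative supersolutions that drive the dyadic argument: if `u ≤ s`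
somewhere within distance comparable to `r` of a cube of half side `r`, then this cube contains a
point with `u ≤ M * s`, and `{u ≤ M * s}` fills at least the fraction `η` of it. -/
def HasSpreadDensity (M η : ℝ) (u : En n → ℝ) : Prop :=
  ∀ x ∈ cube n 2, ∀ c r, 0 < r → r ≤ 1 / 2 → halfOpenCube c r ⊆ cube n 2 →
    (∀ i, |x i - c i| ≤ 3 * r) → ∀ s, 0 < s → u x ≤ s →
      (∃ y ∈ halfOpenCube c r, u y ≤ M * s) ∧
        volume.real (halfOpenCube c r ∩ {x | M * s < u x}) ≤
          (1 - η) * volume.real (halfOpenCube c r)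

theorem exists_forall_hasSpreadDensity (n : ℕ) {lam Lam : ℝ} (hlam : 0 < lam) (hLam : 0 ≤ Lam) :
    ∃ M η : ℝ, 2 ≤ M ∧ 0 < η ∧ ∀ u, IsSupersolutionOn (cube n 3) lam Lam u →
      (∀ x ∈ cube n 3, 0 ≤ u x) → HasSpreadDensity M η u := by
  obtain ⟨k, hk⟩ := exists_nat_ge (8 * (n * Lam) / lam)
  have hk : 8 * (n * Lam) ≤ (k + 1) * lam := by
    rw [div_le_iff₀ hlam] at hk
    linarith
  set A : ℝ := ((4 / 3) ^ (k + 2)) ^ (12 * n)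
  have one_le_A : 1 ≤ A := one_le_pow₀ (one_le_pow₀ (by norm_num))
  set E : ℝ := 16 ^ n / volume.real (ball (0 : En n) 1) * (n.factorial * (n * Lam / lam) ^ n)
  have E_nonneg : 0 ≤ E := by positivity
  refine ⟨2 * A, (E + 1)⁻¹, by linarith, by positivity, fun u hu hu₀ x hx c r hr hr' hQ
    hxc s hs hux => ?_⟩
  have c_mem : c ∈ cube n 2 := hQ (ball_subset_halfOpenCube c r (mem_ball_self hr))
  obtain ⟨y, hyc, hy⟩ := hu.exists_closedBall_le_pow_mul hlam hLam hu₀ hk hx c_mem hr hr' hxc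
  rw [mem_closedBall] at hyc
  have hyAs : u y ≤ A * s := hy.trans (by gcongr)
  have y_mem : y ∈ halfOpenCube c r :=
    ball_subset_halfOpenCube c r (mem_ball.2 (by linarith))
  have closedBall_subset : closedBall y (r / 2) ⊆ cube n 3 :=
    (closedBall_subset_closedBall (by linarith : r / 2 ≤ 1 / 2)).trans
      ((closedBall_subset_cube (hQ y_mem)).trans_eq (by norm_num))
  rw [mul_assoc]
  have measurableSet_sublevel : MeasurableSet (halfOpenCube c r ∩ {x | u x ≤ 2 * (A * s)}) := by
    rw [← inter_eq_left.2 (hQ.trans fun z hz i => (hz i).trans (by norm_num) : _ ⊆ cube n 3),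
      inter_assoc]
    exact (measurableSet_halfOpenCube c r).inter
      (measurableSet_inter_setOf_le (isOpen_cube n 3) hu.contDiffOn.continuousOn _)
  refine ⟨⟨y, y_mem, by nlinarith⟩, measureReal_superlevel_le measurableSet_sublevel
    (volume_halfOpenCube_ne_top c hr.le) ?_⟩
  rw [inv_mul_le_iff₀ (by positivity)]
  exact (hu.volume_halfOpenCube_le_mul_sublevel (isOpen_cube n 3) hlam hLam hu₀ hr
    closedBall_subset (by linarith) (by positivity) hyAs).trans (by gcongr; linarith)

end Density

section LevelBounds

variable {α : Type*} [MeasurableSpace α]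

/-- The inductive statement of the dyadic argument: if `f` takes a value at most `M * s` on `Q`,
then `∫ f ^ ε` over `Q` is controlled by `(M * s) ^ ε` times the measure of `Q`, with the
superlevel set `{s < f}` counted with additional weight `K`. Only levels `s ≥ δ` are considered, so
that the induction can start from cubes on which `f` oscillates by at most `δ`. -/
def HasLevelBound (μ : Measure α) (f : α → ℝ) (ε M K δ : ℝ) (Q : Set α) : Prop :=
  ∀ s, δ ≤ s → (∃ x ∈ Q, f x ≤ M * s) →
    ∫ x in Q, f x ^ ε ∂μ ≤ (M * s) ^ ε * (μ.real Q + K * μ.real (Q ∩ {x | s < f x}))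

variable {μ : Measure α} {f : α → ℝ} {ε M K δ : ℝ} {Q : Set α}

lemma setIntegral_rpow_le {b : ℝ} (hQ : μ Q ≠ ⊤) (hε : 0 ≤ ε)
    (hf : ∀ x ∈ Q, f x ∈ Icc 0 b) : ∫ x in Q, f x ^ ε ∂μ ≤ b ^ ε * μ.real Q :=
  (Real.le_norm_self _).trans <| norm_setIntegral_le_of_norm_le_const hQ.lt_top fun x hx => by
    rw [Real.norm_of_nonneg (Real.rpow_nonneg (hf x hx).1 ε)]
    exact Real.rpow_le_rpow (hf x hx).1 (hf x hx).2 hε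

lemma hasLevelBound_of_oscillation_le (hQ : μ Q ≠ ⊤) (hε : 0 ≤ ε) (hM : 2 ≤ M) (hK : 0 ≤ K)
    (hMK : M ^ ε ≤ 1 + K) (hδ : 0 ≤ δ) (hf₀ : ∀ x ∈ Q, 0 ≤ f x)
    (hosc : ∀ x ∈ Q, ∀ y ∈ Q, f x ≤ f y + δ) : HasLevelBound μ f ε M K δ Q := by
  intro s hs ⟨y, hy, hys⟩
  have s_nonneg : 0 ≤ s := hδ.trans hs
  by_cases hle : ∀ x ∈ Q, f x ≤ M * s
  · calc ∫ x in Q, f x ^ ε ∂μ ≤ (M * s) ^ ε * μ.real Q :=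
          setIntegral_rpow_le hQ hε fun x hx => ⟨hf₀ x hx, hle x hx⟩
      _ ≤ (M * s) ^ ε * (μ.real Q + K * μ.real (Q ∩ {x | s < f x})) := by
        gcongr
        exact le_add_of_nonneg_right (by positivity)
  · push Not at hle
    obtain ⟨z, hz, hzs⟩ := hle
    have inter_eq : Q ∩ {x | s < f x} = Q :=
      inter_eq_left.2 fun x hx => by
        have := hosc z hz x hx
        rw [Set.mem_ofPred_eq]
        nlinarith
    have hMs : M * s + s ≤ M * (M * s) := by nlinarith [mul_le_mul_of_nonneg_right hM s_nonneg]
    calc ∫ x in Q, f x ^ ε ∂μ ≤ (M * (M * s)) ^ ε * μ.real Q :=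
          setIntegral_rpow_le hQ hε fun x hx => ⟨hf₀ x hx, by linarith [hosc x hx y hy]⟩
      _ = (M * s) ^ ε * (M ^ ε * μ.real Q) := by
        rw [Real.mul_rpow (by positivity) (by positivity)]
        ring
      _ ≤ (M * s) ^ ε * ((1 + K) * μ.real Q) := by gcongr
      _ = (M * s) ^ ε * (μ.real Q + K * μ.real (Q ∩ {x | s < f x})) := by
        rw [inter_eq]
        ring

lemma setIntegral_iUnion_le_of_hasLevelBound {ι : Type*} [Finite ι] {P : ι → Set α} {s : ℝ}
    (hP : ∀ i, MeasurableSet (P i)) (hdisj : Pairwise (Function.onFun Disjoint P))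
    (hfin : μ (⋃ i, P i) ≠ ⊤) (hint : IntegrableOn (fun x => f x ^ ε) (⋃ i, P i) μ)
    (hbound : ∀ i, HasLevelBound μ f ε M K δ (P i)) (hs : δ ≤ s)
    (hfP : ∀ i, ∃ x ∈ P i, f x ≤ M * s) :
    ∫ x in ⋃ i, P i, f x ^ ε ∂μ ≤
      (M * s) ^ ε * (μ.real (⋃ i, P i) + K * μ.real ((⋃ i, P i) ∩ {x | s < f x})) := by
  cases nonempty_fintype ι
  have hfin_i (i : ι) : μ (P i) ≠ ⊤ := measure_ne_top_of_subset (subset_iUnion P i) hfin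
  have sum_inter : ∑ i, μ.real (P i ∩ {x | s < f x}) =
      μ.real ((⋃ i, P i) ∩ {x | s < f x}) := by
    simp_rw [← measureReal_restrict_apply (hP _)]
    rw [← measureReal_restrict_apply (MeasurableSet.iUnion hP),
      measureReal_iUnion_fintype hdisj hP fun i =>
        ((Measure.restrict_apply_le _ _).trans_lt (hfin_i i).lt_top).ne]
  rw [integral_iUnion_fintype hP hdisj fun i => hint.mono_set (subset_iUnion P i)]
  calc ∑ i, ∫ x in P i, f x ^ ε ∂μ
      ≤ ∑ i, (M * s) ^ ε * (μ.real (P i) + K * μ.real (P i ∩ {x | s < f x})) :=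
        Finset.sum_le_sum fun i _ => hbound i s hs (hfP i)
    _ = _ := by
        rw [← Finset.mul_sum, Finset.sum_add_distrib, ← Finset.mul_sum, sum_inter,
          measureReal_iUnion_fintype hdisj hP hfin_i]

theorem hasLevelBound_iUnion {ι : Type*} [Finite ι] {P : ι → Set α} {η : ℝ}
    (hM : 1 ≤ M) (hK : 0 ≤ K) (hKη : (M ^ 2) ^ ε * (1 + K * (1 - η)) ≤ K) (hδ : 0 ≤ δ)
    (hP : ∀ i, MeasurableSet (P i)) (hdisj : Pairwise (Function.onFun Disjoint P))
    (hfin : μ (⋃ i, P i) ≠ ⊤) (hint : IntegrableOn (fun x => f x ^ ε) (⋃ i, P i) μ)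
    (hspread : ∀ s, δ ≤ s → (∃ x ∈ ⋃ i, P i, f x ≤ s) → ∀ i, ∃ x ∈ P i, f x ≤ M * s)
    (hdensity : ∀ s, δ ≤ s → (∃ x ∈ ⋃ i, P i, f x ≤ s) →
      μ.real ((⋃ i, P i) ∩ {x | M * s < f x}) ≤ (1 - η) * μ.real (⋃ i, P i))
    (hbound : ∀ i, HasLevelBound μ f ε M K δ (P i)) :
    HasLevelBound μ f ε M K δ (⋃ i, P i) := by
  intro s hs hfQ
  set Q := ⋃ i, P i
  have s_nonneg : 0 ≤ s := hδ.trans hs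
  by_cases hlow : ∃ x ∈ Q, f x ≤ s
  · exact setIntegral_iUnion_le_of_hasLevelBound hP hdisj hfin hint hbound hs (hspread s hs hlow)
  · -- All of `Q` has weight `1 + K`; the density estimate pays for raising the level by `M ^ 2`.
    push Not at hlow
    have hMs : δ ≤ M * s := hs.trans (le_mul_of_one_le_left s_nonneg hM)
    have hMMs : M * s ≤ M * (M * s) := le_mul_of_one_le_left (by positivity) hM
    calc ∫ x in Q, f x ^ ε ∂μ
        ≤ (M * (M * (M * s))) ^ ε * (μ.real Q + K * μ.real (Q ∩ {x | M * (M * s) < f x})) :=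
          setIntegral_iUnion_le_of_hasLevelBound hP hdisj hfin hint hbound (hMs.trans hMMs)
            fun i => (hspread _ hMs hfQ i).imp fun x hx => ⟨hx.1, hx.2.trans (by gcongr)⟩
      _ ≤ (M * (M * (M * s))) ^ ε * (μ.real Q + K * ((1 - η) * μ.real Q)) := by
          gcongr
          exact hdensity _ hMs hfQ
      _ = (M * s) ^ ε * ((M ^ 2) ^ ε * (1 + K * (1 - η)) * μ.real Q) := by
          rw [show M * (M * (M * s)) = M ^ 2 * (M * s) by ring,
            Real.mul_rpow (by positivity) (by positivity)]
          ring
      _ ≤ (M * s) ^ ε * (K * μ.real Q) := by gcongr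
      _ ≤ (M * s) ^ ε * (μ.real Q + K * μ.real (Q ∩ {x | s < f x})) := by
          rw [inter_eq_left.2 (show Q ⊆ {x | s < f x} from hlow)]
          gcongr
          exact le_add_of_nonneg_left measureReal_nonneg

lemma exists_rpow_level_constants {M η : ℝ} (hM : 0 < M) (hη : 0 < η) :
    ∃ ε K : ℝ, 0 < ε ∧ 0 < K ∧ M ^ ε ≤ 1 + K ∧ (M ^ 2) ^ ε * (1 + K * (1 - η)) ≤ K := by
  have tendsto_rpow {b : ℝ} (hb : 0 < b) : Tendsto (fun ε : ℝ => b ^ ε) (𝓝[>] 0) (𝓝 1) := by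
    have := (Real.continuous_const_rpow hb.ne').tendsto 0
    rw [Real.rpow_zero] at this
    exact this.mono_left nhdsWithin_le_nhds
  have hK : 1 * (1 + 2 / η * (1 - η)) < 2 / η := by
    field_simp
    linarith
  have hK' : 1 < 1 + 2 / η := by simpa using div_pos two_pos hη
  obtain ⟨ε, hMε, hKε, hε⟩ := (((tendsto_rpow hM).eventually_le_const hK').and
    ((((tendsto_rpow (pow_pos hM 2)).mul_const _).eventually_le_const hK).and
      self_mem_nhdsWithin)).exists
  exact ⟨ε, 2 / η, hε, by positivity, hMε, hKε⟩

end LevelBounds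

section DyadicInduction

variable {n : ℕ} {u : En n → ℝ} {ε M K η δ : ℝ}

lemma exists_hasLevelBound_of_le (hu : ContinuousOn u (cube n 2)) (hu₀ : ∀ x ∈ cube n 2, 0 ≤ u x)
    (hε : 0 ≤ ε) (hM : 2 ≤ M) (hK : 0 ≤ K) (hMK : M ^ ε ≤ 1 + K) (hδ : 0 < δ) :
    ∃ r₀ > 0, ∀ c r, 0 < r → r ≤ r₀ → halfOpenCube c r ⊆ halfOpenCube 0 (1 / 2) →
      HasLevelBound volume u ε M K δ (halfOpenCube c r) := by
  obtain ⟨T, hT, hQT, hT2⟩ := 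
    exists_isCompact_halfOpenCube_subset n (r := 1 / 2) (s := 2) (by norm_num)
  obtain ⟨γ, hγ, huγ⟩ := Metric.uniformContinuousOn_iff.1
    (hT.uniformContinuousOn_of_continuous (hu.mono hT2)) δ hδ
  refine ⟨γ / (2 * n + 1), by positivity, fun c r hr hrr₀ hQ =>
    hasLevelBound_of_oscillation_le (volume_halfOpenCube_ne_top c hr.le) hε hM hK hMK hδ.le
      (fun x hx => hu₀ x (hT2 (hQT (hQ hx)))) fun x hx y hy => ?_⟩
  have dist_lt : dist x y < γ := calc
    dist x y ≤ n * r + n * r := (dist_triangle_right x y c).trans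
      (add_le_add (halfOpenCube_subset_closedBall c hr.le hx)
        (halfOpenCube_subset_closedBall c hr.le hy))
    _ < (2 * n + 1) * r := by linarith
    _ ≤ γ := (le_div_iff₀' (by positivity)).1 hrr₀
  have := huγ x (hQT (hQ hx)) y (hQT (hQ hy)) dist_lt
  rw [Real.dist_eq] at this
  linarith [le_abs_self (u x - u y)]

lemma HasSpreadDensity.hasLevelBound_of_children (hu : HasSpreadDensity M η u) (hM : 1 ≤ M)
    (hK : 0 ≤ K) (hKη : (M ^ 2) ^ ε * (1 + K * (1 - η)) ≤ K) (hδ : 0 < δ) {c : En n} {r : ℝ}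
    (hr : 0 < r) (hr' : 2 * r ≤ 1 / 2) (hQ : halfOpenCube c (2 * r) ⊆ cube n 2)
    (hint : IntegrableOn (fun x => u x ^ ε) (halfOpenCube c (2 * r)))
    (hbound : ∀ σ, HasLevelBound volume u ε M K δ (halfOpenCube (childCenter c r σ) r)) :
    HasLevelBound volume u ε M K δ (halfOpenCube c (2 * r)) := by
  have hfin := volume_halfOpenCube_ne_top c (r := 2 * r) (by positivity)
  rw [← iUnion_halfOpenCube_childCenter] at hQ hint hfin ⊢
  refine hasLevelBound_iUnion hM hK hKη hδ.le (fun σ => measurableSet_halfOpenCube _ r)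
    (pairwise_disjoint_halfOpenCube_childCenter c r) hfin hint ?_ ?_ hbound
  · rintro s hs ⟨x, hx, hxs⟩ σ
    refine (hu x (hQ hx) _ r hr (by linarith) ((subset_iUnion _ σ).trans hQ) (fun i => ?_) s
      (hδ.trans_le hs) hxs).1
    rw [iUnion_halfOpenCube_childCenter] at hx
    calc |x i - childCenter c r σ i| ≤ |x i - c i| + |c i - childCenter c r σ i| :=
          abs_sub_le _ _ _
      _ ≤ 2 * r + r := add_le_add (abs_apply_sub_le_of_mem_halfOpenCube hx i)
          (abs_apply_sub_childCenter c hr.le σ i).le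
      _ = 3 * r := by ring
  · rintro s hs ⟨x, hx, hxs⟩
    have hx2 := hQ hx
    rw [iUnion_halfOpenCube_childCenter] at hQ hx ⊢
    exact (hu x hx2 c (2 * r) (by positivity) hr' hQ
      (fun i => (abs_apply_sub_le_of_mem_halfOpenCube hx i).trans (by linarith)) s
      (hδ.trans_le hs) hxs).2

lemma integrableOn_rpow_halfOpenCube (hu : ContinuousOn u (cube n 2)) (hε : 0 ≤ ε) :
    IntegrableOn (fun x => u x ^ ε) (halfOpenCube 0 (1 / 2)) := by
  obtain ⟨T, hT, hQT, hT2⟩ := 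
    exists_isCompact_halfOpenCube_subset n (r := 1 / 2) (s := 2) (by norm_num)
  exact (((hu.mono hT2).rpow_const fun _ _ => Or.inr hε).integrableOn_compact hT).mono_set hQT

theorem HasSpreadDensity.hasLevelBound_halfOpenCube (hu : HasSpreadDensity M η u)
    (hcont : ContinuousOn u (cube n 2)) (hu₀ : ∀ x ∈ cube n 2, 0 ≤ u x) (hε : 0 ≤ ε)
    (hM : 2 ≤ M) (hK : 0 ≤ K) (hMK : M ^ ε ≤ 1 + K)
    (hKη : (M ^ 2) ^ ε * (1 + K * (1 - η)) ≤ K) (hδ : 0 < δ) :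
    HasLevelBound volume u ε M K δ (halfOpenCube 0 (1 / 2)) := by
  obtain ⟨r₀, r₀_pos, base⟩ := exists_hasLevelBound_of_le hcont hu₀ hε hM hK hMK hδ
  have induction_claim (k : ℕ) : ∀ c r, 0 < r → r ≤ 2 ^ k * r₀ → r ≤ 1 / 2 →
      halfOpenCube c r ⊆ halfOpenCube 0 (1 / 2) →
      HasLevelBound volume u ε M K δ (halfOpenCube c r) := by
    induction k with
    | zero => exact fun c r hr hrk _ hQ => base c r hr (by simpa using hrk) hQ
    | succ k ih =>
      intro c r hr hrk hr' hQ
      obtain ⟨ρ, rfl⟩ : ∃ ρ, r = 2 * ρ := ⟨r / 2, by ring⟩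
      have ρ_pos : 0 < ρ := by linarith
      refine hu.hasLevelBound_of_children (by linarith) hK hKη hδ ρ_pos hr'
        (hQ.trans (halfOpenCube_subset_cube (by norm_num)))
        ((integrableOn_rpow_halfOpenCube hcont hε).mono_set hQ) fun σ =>
        ih _ ρ ρ_pos (by rw [pow_succ] at hrk; linarith) (by linarith) ?_
      rw [← iUnion_halfOpenCube_childCenter] at hQ
      exact (subset_iUnion _ σ).trans hQ
  obtain ⟨k, hk⟩ := pow_unbounded_of_one_lt (1 / 2 / r₀) one_lt_two
  exact induction_claim k 0 (1 / 2) (by norm_num) ((div_le_iff₀ r₀_pos).1 hk.le) le_rfl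
    Subset.rfl

lemma HasLevelBound.rpow_setIntegral_cube_le (hu : HasLevelBound volume u ε M K δ
    (halfOpenCube 0 (1 / 2))) (hcont : ContinuousOn u (cube n 2))
    (hu₀ : ∀ x ∈ cube n 2, 0 ≤ u x) (hε : 0 < ε) (hM : 0 ≤ M) (hK : 0 ≤ K) (hδ : 0 ≤ δ)
    (huδ : ∃ x ∈ halfOpenCube 0 (1 / 2), u x ≤ M * δ) :
    (∫ x in cube n 1, u x ^ ε) ^ (1 / ε) ≤ M * (1 + K) ^ (1 / ε) * δ := by
  have subset_cube : halfOpenCube (0 : En n) (1 / 2) ⊆ cube n 2 :=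
    halfOpenCube_subset_cube (by norm_num)
  have volume_eq : volume.real (halfOpenCube (0 : En n) (1 / 2)) = 1 := by
    rw [volume_halfOpenCube _ (by norm_num)]
    norm_num
  have rpow_nonneg (x : En n) (hx : x ∈ cube n 2) : 0 ≤ u x ^ ε := Real.rpow_nonneg (hu₀ x hx) ε
  have integral_le : ∫ x in cube n 1, u x ^ ε ≤ (M * δ) ^ ε * (1 + K) := calc
    ∫ x in cube n 1, u x ^ ε ≤ ∫ x in halfOpenCube 0 (1 / 2), u x ^ ε :=
        setIntegral_mono_set (integrableOn_rpow_halfOpenCube hcont hε.le)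
          ((ae_restrict_iff' (measurableSet_halfOpenCube _ _)).2
            (.of_forall fun x hx => rpow_nonneg x (subset_cube hx)))
          (cube_subset_halfOpenCube n 1).eventuallyLE
    _ ≤ (M * δ) ^ ε * (volume.real (halfOpenCube (0 : En n) (1 / 2)) +
          K * volume.real (halfOpenCube 0 (1 / 2) ∩ {x | δ < u x})) := hu δ le_rfl huδ
    _ ≤ (M * δ) ^ ε * (1 + K) := by
        have : volume.real (halfOpenCube 0 (1 / 2) ∩ {x | δ < u x}) ≤ 1 :=
          (measureReal_mono inter_subset_left
            (volume_halfOpenCube_ne_top _ (by norm_num))).trans_eq volume_eq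
        rw [volume_eq]
        gcongr
        exact mul_le_of_le_one_right hK this
  calc (∫ x in cube n 1, u x ^ ε) ^ (1 / ε) ≤ ((M * δ) ^ ε * (1 + K)) ^ (1 / ε) :=
        Real.rpow_le_rpow (setIntegral_nonneg (isOpen_cube n 1).measurableSet fun x hx =>
          rpow_nonneg x (subset_cube (cube_subset_halfOpenCube n 1 hx))) integral_le (by positivity)
    _ = M * (1 + K) ^ (1 / ε) * δ := by
        rw [Real.mul_rpow (by positivity) (by positivity), one_div,
          Real.rpow_rpow_inv (by positivity) hε.ne']
        ring

end DyadicInduction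

theorem L_epsilon_estimate_general (n : ℕ) {lam Lam : ℝ} (hlam : 0 < lam) (hLam : lam ≤ Lam) :
    ∃ ε C : ℝ, 0 < ε ∧ 0 < C ∧ ∀ v, IsSupersolutionOn (cube n 3) lam Lam v →
      (∀ x ∈ cube n 3, 0 ≤ v x) → ∀ y ∈ cube n 2,
        (∫ x in cube n 1, v x ^ ε) ^ (1 / ε) ≤ C * v y := by
  obtain ⟨M, η, hM, hη, spread⟩ := exists_forall_hasSpreadDensity n hlam (hlam.le.trans hLam)
  have M_pos : 0 < M := by linarith
  obtain ⟨ε, K, hε, hK, hMK, hKη⟩ := exists_rpow_level_constants M_pos hη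
  refine ⟨ε, M * (1 + K) ^ (1 / ε), hε, by positivity, fun v hv hv₀ y hy => ?_⟩
  have cube_subset : cube n 2 ⊆ cube n 3 := fun x hx i => (hx i).trans (by norm_num)
  have v_cont : ContinuousOn v (cube n 2) := hv.contDiffOn.continuousOn.mono cube_subset
  have v_nonneg (x : En n) (hx : x ∈ cube n 2) : 0 ≤ v x := hv₀ x (cube_subset hx)
  -- `v y` may vanish, so the estimate is first proved with any level `s > v y` in its place.
  refine le_of_forall_gt_imp_ge_of_dense fun t ht => ?_
  obtain ⟨s, hys, rfl⟩ : ∃ s, v y < s ∧ M * (1 + K) ^ (1 / ε) * s = t :=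
    ⟨t / (M * (1 + K) ^ (1 / ε)), by rwa [lt_div_iff₀' (by positivity)], by field_simp⟩
  have s_pos : 0 < s := (v_nonneg y hy).trans_lt hys
  obtain ⟨hlow, -⟩ := spread v hv hv₀ y hy 0 (1 / 2) (by norm_num) le_rfl
    (halfOpenCube_subset_cube (by norm_num))
    (fun i => by simpa using (hy i).le.trans (by norm_num)) s s_pos hys.le
  exact ((spread v hv hv₀).hasLevelBound_halfOpenCube v_cont v_nonneg hε.le hM hK.le hMK hKη
    s_pos).rpow_setIntegral_cube_le v_cont v_nonneg hε M_pos.le hK.le s_pos.le hlow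

/-- **`L^ε` estimate.** There are `ε > 0` and `C > 0` depending only on `n, λ, Λ` such that
any nonnegative `C²` supersolution of `Σ a_{ij} ∂_{ij} v ≤ 0` in `Q₃` satisfies
`(∫_{Q₁} v^ε)^{1/ε} ≤ C inf_{Q₂} v`. -/
theorem L_epsilon_estimate
    (n : ℕ) (hn : 2 ≤ n) (lam Lam : ℝ) (hlam : 0 < lam) (hLam : lam ≤ Lam) :
    ∃ ε C : ℝ, 0 < ε ∧ 0 < C ∧
      ∀ (a : Fin n → Fin n → En n → ℝ) (v : En n → ℝ),
        UnifEllipticOn (cube n 3) lam Lam a →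
        ContDiffOn ℝ 2 v (cube n 3) →
        (∀ x ∈ cube n 3, 0 ≤ v x) →
        (∀ x ∈ cube n 3, ∑ i, ∑ j, a i j x * pd2 v i j x ≤ 0) →
        ∀ y ∈ cube n 2,
          (∫ x in cube n 1, v x ^ ε) ^ (1 / ε) ≤ C * v y := by
  obtain ⟨ε, C, hε, hC, estimate⟩ := L_epsilon_estimate_general n hlam hLam
  exact ⟨ε, C, hε, hC, fun a v ha hv hv₀ hav =>
    estimate v ⟨hv, fun x hx => ⟨fun i j => a i j x, ha.2 x hx, hav x hx⟩⟩ hv₀⟩
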